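/- arXiv:0711.2992 — 5 statements merged into one kernel-verified Lean document; each statement's English description precedes it below -/
import Mathlib

section
/- Fix a real number w with w ≠ 0, and define D(u) := u² + 3(w² − 4w), M̄₊(u) := 36w²((w+u)² − 4w)/D(u)² and M̄₋(u) := 36w²((w−u)² − 4w)/D(u)². If u₀ ≥ 0 and u₁ ≥ 0 satisfy D(u₀) ≠ 0, D(u₁) ≠ 0, M̄₊(u₀) = M̄₊(u₁) and M̄₋(u₀) = M̄₋(u₁), then u₀ = u₁. (Thus the constant-radius vacuum shell joining two given bulk masses is unique.) -/
/-!
Put `c = w² - 4w`, so that `D u = u² + 3c`. The difference and the sum of the two masses are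
`144 w³ u / D²` and `72 w² (u² + c) / D²`, hence the masses determine `u / D²` and `(u² + c) / D²`,
and with them the ratio `u / (u² + c)`. This ratio is invariant under `u ↦ c / u`, so two solutions
`x ≠ y` would satisfy `x y = c`. But then `D x = x (x + 3y)` and `D y = y (y + 3x)`, and
`y (D x)² - x (D y)² = x y (x - y)³` forces `x = y` after all.
-/

section NoZeroDivisors

variable {R : Type*} [CommRing R] [NoZeroDivisors R] {c x y : R}

theorem mul_sq_add_eq_mul_sq_add_iff :
    x * (y ^ 2 + c) = y * (x ^ 2 + c) ↔ x = y ∨ x * y = c := by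
  have factorization : x * (y ^ 2 + c) - y * (x ^ 2 + c) = -((x - y) * (x * y - c)) := by ring
  rw [← sub_eq_zero, factorization, neg_eq_zero, mul_eq_zero, sub_eq_zero, sub_eq_zero]

theorem eq_of_mul_sq_add_three_mul_mul_sq_eq (hx : x ≠ 0) (hy : y ≠ 0)
    (h : x * (y ^ 2 + 3 * (x * y)) ^ 2 = y * (x ^ 2 + 3 * (x * y)) ^ 2) : x = y := by
  have cube_eq_zero : x * y * (x - y) ^ 3 = 0 := by linear_combination -h
  exact sub_eq_zero.mp <| eq_zero_of_pow_eq_zero <|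
    (mul_eq_zero.mp cube_eq_zero).resolve_left (mul_ne_zero hx hy)

theorem eq_of_mul_sq_add_three_mul_sq_eq
    (hx : x ^ 2 + 3 * c ≠ 0) (hy : y ^ 2 + 3 * c ≠ 0)
    (hdiff : x * (y ^ 2 + 3 * c) ^ 2 = y * (x ^ 2 + 3 * c) ^ 2)
    (hsum : (x ^ 2 + c) * (y ^ 2 + 3 * c) ^ 2 = (y ^ 2 + c) * (x ^ 2 + 3 * c) ^ 2) :
    x = y := by
  have ratio_eq : x * (y ^ 2 + c) = y * (x ^ 2 + c) := by
    apply mul_left_cancel₀ (mul_ne_zero (pow_ne_zero 2 hx) (pow_ne_zero 2 hy))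
    linear_combination (y ^ 2 + c) * (x ^ 2 + 3 * c) ^ 2 * hdiff - y * (x ^ 2 + 3 * c) ^ 2 * hsum
  obtain hxy | rfl := mul_sq_add_eq_mul_sq_add_iff.mp ratio_eq
  · exact hxy
  · have x_ne_zero : x ≠ 0 := by rintro rfl; simp at hx
    have y_ne_zero : y ≠ 0 := by rintro rfl; simp at hy
    exact eq_of_mul_sq_add_three_mul_mul_sq_eq x_ne_zero y_ne_zero hdiff

end NoZeroDivisors

theorem stmt_0_general {K : Type*} [Field K] (h6 : (6 : K) ≠ 0) (w : K) (hw : w ≠ 0)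
    (D Mp Mm : K → K)
    (hD : ∀ u, D u = u ^ 2 + 3 * (w ^ 2 - 4 * w))
    (hMp : ∀ u, Mp u = 36 * w ^ 2 * ((w + u) ^ 2 - 4 * w) / (D u) ^ 2)
    (hMm : ∀ u, Mm u = 36 * w ^ 2 * ((w - u) ^ 2 - 4 * w) / (D u) ^ 2)
    (u₀ u₁ : K) (hD₀ : D u₀ ≠ 0) (hD₁ : D u₁ ≠ 0)
    (hp : Mp u₀ = Mp u₁) (hm : Mm u₀ = Mm u₁) :
    u₀ = u₁ := by
  rw [hMp, hMp, div_eq_div_iff (pow_ne_zero 2 hD₀) (pow_ne_zero 2 hD₁)] at hp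
  rw [hMm, hMm, div_eq_div_iff (pow_ne_zero 2 hD₀) (pow_ne_zero 2 hD₁)] at hm
  -- The numerical factors to cancel, 144 and 72, are written as `6 ^ 4 / 9` and `6 ^ 3 / 3`.
  have hdiff : u₀ * D u₁ ^ 2 = u₁ * D u₀ ^ 2 := by
    apply mul_left_cancel₀ (mul_ne_zero (pow_ne_zero 4 h6) (pow_ne_zero 3 hw))
    linear_combination 9 * (hp - hm)
  have hsum : (u₀ ^ 2 + (w ^ 2 - 4 * w)) * D u₁ ^ 2 =
      (u₁ ^ 2 + (w ^ 2 - 4 * w)) * D u₀ ^ 2 := by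
    apply mul_left_cancel₀ (mul_ne_zero (pow_ne_zero 3 h6) (pow_ne_zero 2 hw))
    linear_combination 3 * (hp + hm)
  rw [hD] at hD₀ hD₁
  rw [hD, hD] at hdiff hsum
  exact eq_of_mul_sq_add_three_mul_sq_eq hD₀ hD₁ hdiff hsum

/-- Uniqueness of the constant-radius vacuum shell joining two given bulk masses:
for fixed `w ≠ 0`, the pair of mass parameters determines `u ≥ 0` uniquely. -/
theorem stmt_0 (w : ℝ) (hw : w ≠ 0)
    (D Mp Mm : ℝ → ℝ)
    (hD : ∀ u, D u = u ^ 2 + 3 * (w ^ 2 - 4 * w))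
    (hMp : ∀ u, Mp u = 36 * w ^ 2 * ((w + u) ^ 2 - 4 * w) / (D u) ^ 2)
    (hMm : ∀ u, Mm u = 36 * w ^ 2 * ((w - u) ^ 2 - 4 * w) / (D u) ^ 2)
    (u₀ u₁ : ℝ) (hu₀ : 0 ≤ u₀) (hu₁ : 0 ≤ u₁)
    (hD₀ : D u₀ ≠ 0) (hD₁ : D u₁ ≠ 0)
    (hp : Mp u₀ = Mp u₁) (hm : Mm u₀ = Mm u₁) :
    u₀ = u₁ :=
  stmt_0_general (by norm_num) w hw D Mp Mm hD hMp hMm u₀ u₁ hD₀ hD₁ hp hm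
end

section
/- Let w > 0 with w ≠ 1, and set u := w + 2√w. Then D(w,u) = 4w(√w + 2)(√w − 1) ≠ 0, M̄₋(w,u) = 0, and M̄₊(w,u) = 9w√w / ((w−3)√w + 2), where the denominator satisfies (w−3)√w + 2 = (√w − 1)²(√w + 2) ≠ 0. (This describes the vacuum shells for which one bulk region is a pure constant-curvature vacuum and gives the mass of the other side.) -/
/-!
On the curve `(w, u) = (s², s² + 2s)` the condition `(w - u)² = 4w` for `M̄₋ = 0` holds
identically, and `D` and the numerator of `M̄₊` become products of powers of `s`, `s + 2` and
`s - 1`. Their common factor `16 s⁴ (s + 2)` cancels, leaving `M̄₊ = 9 s³ / ((s - 1)² (s + 2))`.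
The choice `s = √w` recovers the shells with `u = w + 2√w`; a negative `s` gives the other
branch `u = w - 2√w`.
-/

namespace VacuumShell

section CommRing

variable {R : Type*} [CommRing R]

/-- The polynomial `D(w, u)`, whose square is the denominator of both mass parameters. -/
def denom (w u : R) : R :=
  u ^ 2 + 3 * (w ^ 2 - 4 * w)

theorem denom_sq_add_two_mul (s : R) :
    denom (s ^ 2) (s ^ 2 + 2 * s) = 4 * s ^ 2 * (s + 2) * (s - 1) := by
  unfold denom
  ring

theorem sq_sub_three_mul_add_two (s : R) :
    (s ^ 2 - 3) * s + 2 = (s - 1) ^ 2 * (s + 2) := by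
  ring

end CommRing

section Field

variable {K : Type*} [Field K]

/-- The mass parameter `M̄₊(w, u)`, meaningful only where `denom w u ≠ 0`. -/
def massPlus (w u : K) : K :=
  36 * w ^ 2 * ((w + u) ^ 2 - 4 * w) / denom w u ^ 2

/-- The mass parameter `M̄₋(w, u)`, meaningful only where `denom w u ≠ 0`. -/
def massMinus (w u : K) : K :=
  36 * w ^ 2 * ((w - u) ^ 2 - 4 * w) / denom w u ^ 2

theorem massMinus_sq_add_two_mul (s : K) : massMinus (s ^ 2) (s ^ 2 + 2 * s) = 0 := by
  have numerator_factor : (s ^ 2 - (s ^ 2 + 2 * s)) ^ 2 - 4 * s ^ 2 = 0 := by ring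
  rw [massMinus, numerator_factor, mul_zero, zero_div]

variable [NeZero (2 : K)] {s : K}

theorem denom_sq_add_two_mul_ne_zero (hs0 : s ≠ 0) (hs1 : s ≠ 1) (hs2 : s + 2 ≠ 0) :
    denom (s ^ 2) (s ^ 2 + 2 * s) ≠ 0 := by
  have four_ne : (4 : K) ≠ 0 := by
    rw [show (4 : K) = 2 ^ 2 by norm_num]
    exact pow_ne_zero 2 two_ne_zero
  rw [denom_sq_add_two_mul]
  exact mul_ne_zero (mul_ne_zero (mul_ne_zero four_ne (pow_ne_zero 2 hs0)) hs2)
    (sub_ne_zero.2 hs1)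

theorem massPlus_sq_add_two_mul (hs0 : s ≠ 0) (hs2 : s + 2 ≠ 0) :
    massPlus (s ^ 2) (s ^ 2 + 2 * s) = 9 * s ^ 3 / ((s - 1) ^ 2 * (s + 2)) := by
  have common_factor_ne_zero : 2 ^ 4 * s ^ 4 * (s + 2) ≠ 0 :=
    mul_ne_zero (mul_ne_zero (pow_ne_zero 4 two_ne_zero) (pow_ne_zero 4 hs0)) hs2
  calc massPlus (s ^ 2) (s ^ 2 + 2 * s)
      = (2 ^ 4 * s ^ 4 * (s + 2)) * (9 * s ^ 3) /
          ((2 ^ 4 * s ^ 4 * (s + 2)) * ((s - 1) ^ 2 * (s + 2))) := by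
        rw [massPlus, denom_sq_add_two_mul]
        congr 1 <;> ring
    _ = 9 * s ^ 3 / ((s - 1) ^ 2 * (s + 2)) := mul_div_mul_left _ _ common_factor_ne_zero

end Field

end VacuumShell

open VacuumShell in
theorem stmt_4_general {K : Type*} [Field K] [NeZero (2 : K)] {w u s : K} (hs : s ^ 2 = w)
    (hu : u = w + 2 * s) (hs0 : s ≠ 0) (hs1 : s ≠ 1) (hs2 : s + 2 ≠ 0) :
    denom w u = 4 * w * (s + 2) * (s - 1) ∧
    denom w u ≠ 0 ∧
    massMinus w u = 0 ∧
    (w - 3) * s + 2 = (s - 1) ^ 2 * (s + 2) ∧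
    (w - 3) * s + 2 ≠ 0 ∧
    massPlus w u = 9 * w * s / ((w - 3) * s + 2) := by
  subst hs hu
  refine ⟨denom_sq_add_two_mul s, denom_sq_add_two_mul_ne_zero hs0 hs1 hs2,
    massMinus_sq_add_two_mul s, sq_sub_three_mul_add_two s, ?_, ?_⟩
  · rw [sq_sub_three_mul_add_two]
    exact mul_ne_zero (pow_ne_zero 2 (sub_ne_zero.2 hs1)) hs2
  · rw [sq_sub_three_mul_add_two, massPlus_sq_add_two_mul hs0 hs2, mul_assoc, ← pow_succ]

/-- Zero-mass ("hole in the vacuum") shells: for `w > 0`, `w ≠ 1` and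
`u = w + 2√w` one has `D = 4w(√w+2)(√w−1) ≠ 0`, `M̄₋ = 0` and
`M̄₊ = 9w√w/((w−3)√w+2)` with nonvanishing denominator. -/
theorem stmt_4 (w u : ℝ) (hw : 0 < w) (hw1 : w ≠ 1)
    (hu : u = w + 2 * Real.sqrt w) :
    u ^ 2 + 3 * (w ^ 2 - 4 * w)
      = 4 * w * (Real.sqrt w + 2) * (Real.sqrt w - 1) ∧
    u ^ 2 + 3 * (w ^ 2 - 4 * w) ≠ 0 ∧
    36 * w ^ 2 * ((w - u) ^ 2 - 4 * w) / (u ^ 2 + 3 * (w ^ 2 - 4 * w)) ^ 2 = 0 ∧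
    (w - 3) * Real.sqrt w + 2 = (Real.sqrt w - 1) ^ 2 * (Real.sqrt w + 2) ∧
    (w - 3) * Real.sqrt w + 2 ≠ 0 ∧
    36 * w ^ 2 * ((w + u) ^ 2 - 4 * w) / (u ^ 2 + 3 * (w ^ 2 - 4 * w)) ^ 2
      = 9 * w * Real.sqrt w / ((w - 3) * Real.sqrt w + 2) :=
  stmt_4_general (Real.sq_sqrt hw.le) hu (Real.sqrt_ne_zero'.2 hw) (mt Real.sqrt_eq_one.1 hw1)
    (by positivity)
end

section
/- Let Y_L ≥ 0, Y_R ≥ 0 be real, let ξ_L, ξ_R ∈ {−1, +1}, let σ ∈ {−1, +1} and α ≠ 0 be real. If σα(ξ_R Y_R + ξ_L Y_L) > 0 and 9(ξ_R Y_R + ξ_L Y_L)² ≤ (ξ_R Y_R − ξ_L Y_L)², then ξ_L ξ_R = −1. Hence every vacuum shell with the standard orientation glues a plus-branch (ξ = +1) metric to a minus-branch (ξ = −1) metric. -/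
/-! Since `(a - b)² = (a + b)² - 4ab`, a sum is strictly smaller in absolute value than the
difference exactly when its terms have opposite strict signs. For `a = ξR YR` and `b = ξL YL`, the
positivity condition makes `a + b` nonzero, so the bound with the factor 9 gives the strict
comparison, and the nonnegative roots `YL`, `YR` pass the opposite signs on to `ξL`, `ξR`. -/

section

variable {R : Type*} [CommRing R] [LinearOrder R] [IsStrictOrderedRing R]

theorem add_sq_lt_sub_sq_iff_mul_neg {a b : R} : (a + b) ^ 2 < (a - b) ^ 2 ↔ a * b < 0 := by
  have polarization : (a - b) ^ 2 - (a + b) ^ 2 = 4 * -(a * b) := by ring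
  rw [← sub_pos, polarization, mul_pos_iff_of_pos_left four_pos, neg_pos]

theorem mul_eq_neg_one_of_mul_neg {ε δ : R} (hε : ε = -1 ∨ ε = 1) (hδ : δ = -1 ∨ δ = 1)
    (h : ε * δ < 0) : ε * δ = -1 := by
  have product_sign : ε * δ = -1 ∨ ε * δ = 1 := by
    rcases hε with rfl | rfl <;> rcases hδ with rfl | rfl <;> simp
  exact product_sign.resolve_right (h.trans zero_lt_one).ne

theorem stmt_8_general {YL YR ξL ξR : R} (hY : 0 ≤ YL * YR)
    (hξL : ξL = -1 ∨ ξL = 1) (hξR : ξR = -1 ∨ ξR = 1)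
    (h : (ξR * YR + ξL * YL) ^ 2 < (ξR * YR - ξL * YL) ^ 2) :
    ξL * ξR = -1 := by
  have opposite_terms : ξL * ξR * (YL * YR) < 0 := calc
    ξL * ξR * (YL * YR) = ξR * YR * (ξL * YL) := by ring
    _ < 0 := add_sq_lt_sub_sq_iff_mul_neg.mp h
  exact mul_eq_neg_one_of_mul_neg hξL hξR (neg_of_mul_neg_left opposite_terms hY)

end

/-- A vacuum shell with standard orientation always glues a plus-branch metric
to a minus-branch metric: the junction inequalities force `ξ_L ξ_R = −1`. -/
theorem stmt_8 (YL YR ξL ξR σ α : ℝ)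
    (hYL : 0 ≤ YL) (hYR : 0 ≤ YR)
    (hξL : ξL = -1 ∨ ξL = 1) (hξR : ξR = -1 ∨ ξR = 1)
    (hσ : σ = -1 ∨ σ = 1) (hα : α ≠ 0)
    (h1 : 0 < σ * α * (ξR * YR + ξL * YL))
    (h2 : 9 * (ξR * YR + ξL * YL) ^ 2 ≤ (ξR * YR - ξL * YL) ^ 2) :
    ξL * ξR = -1 := by
  have sum_sq_pos : 0 < (ξR * YR + ξL * YL) ^ 2 :=
    sq_pos_of_ne_zero (right_ne_zero_of_mul h1.ne')
  exact stmt_8_general (mul_nonneg hYL hYR) hξL hξR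
    ((lt_mul_of_one_lt_left sum_sq_pos (by norm_num)).trans_le h2)
end

section
/- Let α ≠ 0, σ ∈ {−1, +1}, k, w, M_L, M_R be real and ξ_L, ξ_R ∈ {−1, +1}. For a > 0 define Y_{L,R}(a) := √(w + 16M_{L,R}α/a⁴), S(a) := ξ_R Y_R(a) + ξ_L Y_L(a), Δ(a) := ξ_R Y_R(a) − ξ_L Y_L(a), and the effective potential V(a) := σ(k + a²/(4α)) − σ(a²/(4α))·(3S(a)² + Δ(a)²)/(12 S(a)). Then at every a₀ > 0 with w + 16M_Lα/a₀⁴ > 0, w + 16M_Rα/a₀⁴ > 0 and S(a₀) ≠ 0, V is differentiable with V'(a₀) = σ(a₀/(2α))·(1 − w/S(a₀)). -/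
/-!
A branch `r = ξ √(w + c / a ^ 4)` with `ξ ^ 2 = 1` satisfies `a r' = -2 (r - w / r)`, an equation
in which neither `c` nor `ξ` appears. For two solutions `r` and `l` with sum `S`, the quotient in
the potential is `(3 S ^ 2 + (r - l) ^ 2) / (12 S) = T / 3` with `T = S - r l / S`, and the flow of
`r` and `l` gives `a T' = -2 T + 6 w / S`. Hence `(a ^ 2 T)' = 6 a w / S`, and `V'` follows because
`V = σ (k + a ^ 2 / (4 α)) - σ a ^ 2 T / (12 α)`.
-/

section SquareRootBranch

variable {w c a : ℝ} {n : ℕ}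

theorem hasDerivAt_add_div_pow (w c : ℝ) (n : ℕ) (ha : a ≠ 0) :
    HasDerivAt (fun x : ℝ => w + c / x ^ n) (-n * (c / a ^ n) / a) a := by
  refine (((hasDerivAt_zpow (-n : ℤ) a (.inl ha)).const_mul c).const_add w).congr_deriv ?_
    |>.congr_of_eventuallyEq (.of_forall fun x => ?_)
  · rw [zpow_sub_one₀ ha, zpow_neg, zpow_natCast]
    push_cast
    ring
  · simp only [zpow_neg, zpow_natCast, div_eq_mul_inv]

theorem hasDerivAt_sqrt_add_div_pow (ha : a ≠ 0) (h : 0 < w + c / a ^ n) :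
    HasDerivAt (fun x : ℝ => √(w + c / x ^ n))
      (-(n / 2) * (√(w + c / a ^ n) - w / √(w + c / a ^ n)) / a) a := by
  refine ((hasDerivAt_add_div_pow w c n ha).sqrt h.ne').congr_deriv ?_
  have hY : √(w + c / a ^ n) ≠ 0 := (Real.sqrt_pos.mpr h).ne'
  have hc : c / a ^ n = √(w + c / a ^ n) ^ 2 - w := by rw [Real.sq_sqrt h.le]; ring
  generalize √(w + c / a ^ n) = Y at hY hc ⊢
  rw [hc]
  field_simp

/-- The signed square root `ξ Y` with `Y(a) = √(w + c / a ^ 4)`, where `c = 16 M α` on the side of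
the shell with mass `M`. -/
noncomputable def signedBranch (ξ w c a : ℝ) : ℝ :=
  ξ * √(w + c / a ^ 4)

variable {ξ : ℝ}

theorem signedBranch_ne_zero (hξ : ξ ≠ 0) (h : 0 < w + c / a ^ 4) : signedBranch ξ w c a ≠ 0 :=
  mul_ne_zero hξ (Real.sqrt_pos.mpr h).ne'

theorem hasDerivAt_signedBranch (hξ : ξ ^ 2 = 1) (ha : a ≠ 0) (h : 0 < w + c / a ^ 4) :
    HasDerivAt (signedBranch ξ w c)
      (-2 * (signedBranch ξ w c a - w / signedBranch ξ w c a) / a) a := by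
  refine ((hasDerivAt_sqrt_add_div_pow ha h).const_mul ξ).congr_deriv ?_
  have hinv : ξ⁻¹ = ξ := inv_eq_of_mul_eq_one_left (by rw [← sq, hξ])
  simp only [signedBranch, div_eq_mul_inv, mul_inv, hinv]
  push_cast
  ring

end SquareRootBranch

section PairOfBranches

variable {𝕜 : Type*} [NontriviallyNormedField 𝕜] {r l : 𝕜 → 𝕜} {r' l' w a : 𝕜}

theorem hasDerivAt_mul_div_add (hr : HasDerivAt r r' a) (hl : HasDerivAt l l' a)
    (hS : r a + l a ≠ 0) :
    HasDerivAt (fun x => r x * l x / (r x + l x))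
      ((r' * l a ^ 2 + l' * r a ^ 2) / (r a + l a) ^ 2) a :=
  ((hr.fun_mul hl).fun_div (hr.fun_add hl) hS).congr_deriv (by ring)

theorem hasDerivAt_add_sub_mul_div_add (hr₀ : r a ≠ 0) (hl₀ : l a ≠ 0) (hS : r a + l a ≠ 0)
    (hr : HasDerivAt r (-2 * (r a - w / r a) / a) a)
    (hl : HasDerivAt l (-2 * (l a - w / l a) / a) a) :
    HasDerivAt (fun x => r x + l x - r x * l x / (r x + l x))
      ((-2 * (r a + l a - r a * l a / (r a + l a)) + 6 * w / (r a + l a)) / a) a := by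
  refine ((hr.fun_add hl).fun_sub (hasDerivAt_mul_div_add hr hl hS)).congr_deriv ?_
  field_simp
  ring

theorem hasDerivAt_sq_mul_add_sub_mul_div_add (hr₀ : r a ≠ 0) (hl₀ : l a ≠ 0) (hS : r a + l a ≠ 0)
    (hr : HasDerivAt r (-2 * (r a - w / r a) / a) a)
    (hl : HasDerivAt l (-2 * (l a - w / l a) / a) a) :
    HasDerivAt (fun x => x ^ 2 * (r x + l x - r x * l x / (r x + l x)))
      (6 * a * w / (r a + l a)) a := by
  refine ((hasDerivAt_pow 2 a).fun_mul
    (hasDerivAt_add_sub_mul_div_add hr₀ hl₀ hS hr hl)).congr_deriv ?_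
  field_simp
  ring

end PairOfBranches

-- At `r + l = 0` both sides vanish, since Lean's division gives `x / 0 = 0`.
theorem three_mul_add_sq_add_sub_sq_div {K : Type*} [Field K] [CharZero K] (r l : K) :
    (3 * (r + l) ^ 2 + (r - l) ^ 2) / (12 * (r + l)) = (r + l - r * l / (r + l)) / 3 := by
  rcases eq_or_ne (r + l) 0 with hS | hS
  · simp [hS]
  · field_simp
    ring

/-- The effective potential `V(a)` of a vacuum shell, for arbitrary functions `r` and `l` in place
of the branches `ξ_R Y_R` and `ξ_L Y_L` on its two sides. -/
noncomputable def effectivePotential (α σ k : ℝ) (r l : ℝ → ℝ) (a : ℝ) : ℝ :=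
  σ * (k + a ^ 2 / (4 * α)) -
    σ * (a ^ 2 / (4 * α)) * (3 * (r a + l a) ^ 2 + (r a - l a) ^ 2) / (12 * (r a + l a))

theorem effectivePotential_eq (α σ k : ℝ) (r l : ℝ → ℝ) (a : ℝ) :
    effectivePotential α σ k r l a =
      σ * (k + a ^ 2 / (4 * α)) -
        σ / (12 * α) * (a ^ 2 * (r a + l a - r a * l a / (r a + l a))) := by
  rw [effectivePotential, mul_div_assoc, three_mul_add_sq_add_sub_sq_div]
  ring

theorem hasDerivAt_effectivePotential {α σ k w a : ℝ} {r l : ℝ → ℝ} (hα : α ≠ 0)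
    (hr₀ : r a ≠ 0) (hl₀ : l a ≠ 0) (hS : r a + l a ≠ 0)
    (hr : HasDerivAt r (-2 * (r a - w / r a) / a) a)
    (hl : HasDerivAt l (-2 * (l a - w / l a) / a) a) :
    HasDerivAt (effectivePotential α σ k r l) (σ * (a / (2 * α)) * (1 - w / (r a + l a))) a := by
  have hquad : HasDerivAt (fun x => σ * (k + x ^ 2 / (4 * α))) (σ * (a / (2 * α))) a := by
    refine ((((hasDerivAt_pow 2 a).div_const (4 * α)).const_add k).const_mul σ).congr_deriv ?_
    field_simp
    ring
  have hpair := (hasDerivAt_sq_mul_add_sub_mul_div_add hr₀ hl₀ hS hr hl).const_mul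
    (σ / (12 * α))
  rw [funext (effectivePotential_eq α σ k r l)]
  exact (hquad.fun_sub hpair).congr_deriv (by ring)

theorem stmt_15_general {α σ k w ML MR ξL ξR a₀ : ℝ} (hα : α ≠ 0)
    (hξL : ξL = -1 ∨ ξL = 1) (hξR : ξR = -1 ∨ ξR = 1) (ha₀ : a₀ ≠ 0)
    (hL : 0 < w + 16 * ML * α / a₀ ^ 4) (hR : 0 < w + 16 * MR * α / a₀ ^ 4)
    (hS : signedBranch ξR w (16 * MR * α) a₀ + signedBranch ξL w (16 * ML * α) a₀ ≠ 0) :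
    HasDerivAt
      (effectivePotential α σ k (signedBranch ξR w (16 * MR * α))
        (signedBranch ξL w (16 * ML * α)))
      (σ * (a₀ / (2 * α)) *
        (1 - w / (signedBranch ξR w (16 * MR * α) a₀ + signedBranch ξL w (16 * ML * α) a₀)))
      a₀ := by
  have hξL_sq : ξL ^ 2 = 1 := sq_eq_one_iff.mpr hξL.symm
  have hξR_sq : ξR ^ 2 = 1 := sq_eq_one_iff.mpr hξR.symm
  have hξL₀ : ξL ≠ 0 := by rcases hξL with rfl | rfl <;> norm_num
  have hξR₀ : ξR ≠ 0 := by rcases hξR with rfl | rfl <;> norm_num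
  exact hasDerivAt_effectivePotential hα (signedBranch_ne_zero hξR₀ hR)
    (signedBranch_ne_zero hξL₀ hL) hS (hasDerivAt_signedBranch hξR_sq ha₀ hR)
    (hasDerivAt_signedBranch hξL_sq ha₀ hL)

/-- The effective potential of a dynamical vacuum shell is differentiable at each
admissible radius `a₀`, with `V'(a₀) = σ(a₀/(2α))(1 − w/S(a₀))`, where
`S = ξ_R Y_R + ξ_L Y_L` and `Y_{L,R}(a) = √(w + 16M_{L,R}α/a⁴)`. -/
theorem stmt_15 (α σ k w ML MR ξL ξR : ℝ) (hα : α ≠ 0)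
    (hσ : σ = -1 ∨ σ = 1) (hξL : ξL = -1 ∨ ξL = 1) (hξR : ξR = -1 ∨ ξR = 1)
    (a₀ : ℝ) (ha₀ : 0 < a₀)
    (hL : 0 < w + 16 * ML * α / a₀ ^ 4)
    (hR : 0 < w + 16 * MR * α / a₀ ^ 4)
    (hS : ξR * Real.sqrt (w + 16 * MR * α / a₀ ^ 4)
        + ξL * Real.sqrt (w + 16 * ML * α / a₀ ^ 4) ≠ 0) :
    HasDerivAt
      (fun a : ℝ =>
        σ * (k + a ^ 2 / (4 * α)) -
          σ * (a ^ 2 / (4 * α)) *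
            (3 * (ξR * Real.sqrt (w + 16 * MR * α / a ^ 4)
                  + ξL * Real.sqrt (w + 16 * ML * α / a ^ 4)) ^ 2
              + (ξR * Real.sqrt (w + 16 * MR * α / a ^ 4)
                  - ξL * Real.sqrt (w + 16 * ML * α / a ^ 4)) ^ 2) /
            (12 * (ξR * Real.sqrt (w + 16 * MR * α / a ^ 4)
                  + ξL * Real.sqrt (w + 16 * ML * α / a ^ 4))))
      (σ * (a₀ / (2 * α)) *
        (1 - w / (ξR * Real.sqrt (w + 16 * MR * α / a₀ ^ 4)
                  + ξL * Real.sqrt (w + 16 * ML * α / a₀ ^ 4))))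
      a₀ :=
  stmt_15_general hα hξL hξR ha₀.ne' hL hR hS
end

section
/- Let b > 0 be real, and define M̄₊ := (b/2)(6 + 3b + √(9b² + 12b)), M̄₋ := (b/2)(6 + 3b − √(9b² + 12b)), Y₊ := √(1 + M̄₊/b²), Y₋ := √(1 + M̄₋/b²), f₊ := 1 + b(1 + Y₊) and f₋ := 1 + b(1 − Y₋). Then M̄₊ > 0 and M̄₋ > 0, f₊ + f₋ = 2 + 3b, f₊·f₋ = 1, and f₊ > 0, f₋ > 0. Hence for Λ = 0 and α > 0 a static vacuum shell with standard orientation exists for every shell radius, gluing a plus-branch metric with mass parameter M₊ = α M̄₊ to a minus-branch metric with mass parameter M₋ = α M̄₋. -/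
/-!
The junction conditions say that the two metric functions at the shell are the roots of
`x² - (2 + 3b)x + 1`. Since `f = 1 + b(1 ± Y)` with `Y² = 1 + M̄/b²` amounts to
`(f - (1 + b))² = b² + M̄`, the quadratic forces `M̄ = b(f + 2)` for either root. The branch sign is
the sign of `f - (1 + b)`, and the quadratic takes the value `-b(2b + 3) < 0` at `1 + b`: the larger
root therefore lies on the plus branch and the smaller one on the minus branch.
-/

/-- The Boulware–Deser metric function with branch sign `ξ` and rescaled mass `M = M̄`, evaluated at
the shell. In terms of `b = a₀²/(4α)`, the term `16Mα/a₀⁴` of the usual formula is `M̄/b²`. -/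
noncomputable def boulwareDeser (ξ b M : ℝ) : ℝ := 1 + b * (1 + ξ * √(1 + M / b ^ 2))

/-- The junction conditions for a static spherical vacuum shell with `Λ = 0`, relating the metric
functions `f` and `g` on its two sides. The condition `√(f g) = 1` is recorded as `f g = 1`. -/
structure IsVacuumShell (b f g : ℝ) : Prop where
  add_eq : f + g = 2 + 3 * b
  mul_eq : f * g = 1

theorem boulwareDeser_eq_of_sq_eq {ξ b M f : ℝ} (hb : 0 < b)
    (hM : (f - (1 + b)) ^ 2 = b ^ 2 + M) (hξ : ξ * |f - (1 + b)| = f - (1 + b)) :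
    boulwareDeser ξ b M = f := by
  have radicand_eq : 1 + M / b ^ 2 = ((f - (1 + b)) / b) ^ 2 := by
    rw [div_pow, hM]
    field_simp
  have sqrt_eq : √(1 + M / b ^ 2) = |f - (1 + b)| / b := by
    rw [radicand_eq, Real.sqrt_sq_eq_abs, abs_div, abs_of_pos hb]
  calc
    boulwareDeser ξ b M = 1 + b + ξ * |f - (1 + b)| := by
      rw [boulwareDeser, sqrt_eq]
      field_simp
      ring
    _ = f := by rw [hξ]; ring

namespace IsVacuumShell

variable {b f g : ℝ}

theorem symm (h : IsVacuumShell b f g) : IsVacuumShell b g f where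
  add_eq := by rw [add_comm, h.add_eq]
  mul_eq := by rw [mul_comm, h.mul_eq]

theorem left_pos (h : IsVacuumShell b f g) (hb : 0 ≤ b) : 0 < f := by
  have fg_pos : 0 < f * g := h.mul_eq ▸ one_pos
  rcases pos_and_pos_or_neg_and_neg_of_mul_pos fg_pos with ⟨hf, -⟩ | ⟨hf, hg⟩
  · exact hf
  · linarith [h.add_eq]

theorem right_pos (h : IsVacuumShell b f g) (hb : 0 ≤ b) : 0 < g :=
  h.symm.left_pos hb

theorem sq_left_sub (h : IsVacuumShell b f g) :
    (f - (1 + b)) ^ 2 = b ^ 2 + b * (f + 2) := by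
  linear_combination f * h.add_eq - h.mul_eq

theorem sub_mul_sub_neg (h : IsVacuumShell b f g) (hb : 0 < b) :
    (f - (1 + b)) * (g - (1 + b)) < 0 :=
  calc
    (f - (1 + b)) * (g - (1 + b)) = -(b * (2 * b + 3)) := by
      linear_combination h.mul_eq - (1 + b) * h.add_eq
    _ < 0 := neg_neg_of_pos (by positivity)

theorem right_lt_and_lt_left (h : IsVacuumShell b f g) (hb : 0 < b) (hgf : g ≤ f) :
    g < 1 + b ∧ 1 + b < f := by
  rcases mul_neg_iff.mp (h.sub_mul_sub_neg hb) with ⟨hf, hg⟩ | ⟨hf, hg⟩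
  · exact ⟨sub_neg.mp hg, sub_pos.mp hf⟩
  · linarith

theorem boulwareDeser_left (h : IsVacuumShell b f g) (hb : 0 < b) (hgf : g ≤ f) :
    boulwareDeser 1 b (b * (f + 2)) = f := by
  have hf : 1 + b < f := (h.right_lt_and_lt_left hb hgf).2
  apply boulwareDeser_eq_of_sq_eq hb h.sq_left_sub
  rw [one_mul, abs_of_pos (sub_pos.mpr hf)]

theorem boulwareDeser_right (h : IsVacuumShell b f g) (hb : 0 < b) (hgf : g ≤ f) :
    boulwareDeser (-1) b (b * (g + 2)) = g := by
  have hg : g < 1 + b := (h.right_lt_and_lt_left hb hgf).1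
  apply boulwareDeser_eq_of_sq_eq hb h.symm.sq_left_sub
  rw [abs_of_neg (sub_neg.mpr hg), neg_one_mul, neg_neg]

end IsVacuumShell

theorem isVacuumShell_quadratic_roots {b : ℝ} (hb : 0 ≤ b) :
    IsVacuumShell b ((2 + 3 * b + √(9 * b ^ 2 + 12 * b)) / 2)
      ((2 + 3 * b - √(9 * b ^ 2 + 12 * b)) / 2) where
  add_eq := by ring
  mul_eq := by
    have sqrt_sq : √(9 * b ^ 2 + 12 * b) ^ 2 = 9 * b ^ 2 + 12 * b := Real.sq_sqrt (by positivity)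
    linear_combination -sqrt_sq / 4

/-- For `Λ = 0` and `α > 0`, a static vacuum shell with standard orientation
exists at every radius: with `b = a₀²/(4α)`, the masses
`M̄₊ = (b/2)(6+3b+√(9b²+12b))` and `M̄₋ = (b/2)(6+3b−√(9b²+12b))` are positive,
and the corresponding metric functions `f₊ = 1+b(1+Y₊)`, `f₋ = 1+b(1−Y₋)` with
`Y± = √(1+M̄±/b²)` satisfy the junction conditions `f₊+f₋ = 2+3b`, `f₊f₋ = 1`,
and are positive. -/
theorem stmt_19 (b : ℝ) (hb : 0 < b)
    (Mp Mm Yp Ym fp fm : ℝ)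
    (hMp : Mp = (b / 2) * (6 + 3 * b + Real.sqrt (9 * b ^ 2 + 12 * b)))
    (hMm : Mm = (b / 2) * (6 + 3 * b - Real.sqrt (9 * b ^ 2 + 12 * b)))
    (hYp : Yp = Real.sqrt (1 + Mp / b ^ 2))
    (hYm : Ym = Real.sqrt (1 + Mm / b ^ 2))
    (hfp : fp = 1 + b * (1 + Yp))
    (hfm : fm = 1 + b * (1 - Ym)) :
    0 < Mp ∧ 0 < Mm ∧ fp + fm = 2 + 3 * b ∧ fp * fm = 1 ∧ 0 < fp ∧ 0 < fm := by
  obtain ⟨f, hf⟩ : ∃ f, f = (2 + 3 * b + √(9 * b ^ 2 + 12 * b)) / 2 := ⟨_, rfl⟩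
  obtain ⟨g, hg⟩ : ∃ g, g = (2 + 3 * b - √(9 * b ^ 2 + 12 * b)) / 2 := ⟨_, rfl⟩
  have shell : IsVacuumShell b f g := hf ▸ hg ▸ isVacuumShell_quadratic_roots hb.le
  have hgf : g ≤ f := by linarith [Real.sqrt_nonneg (9 * b ^ 2 + 12 * b)]
  have Mp_eq : Mp = b * (f + 2) := by rw [hMp, hf]; ring
  have Mm_eq : Mm = b * (g + 2) := by rw [hMm, hg]; ring
  have fp_eq : fp = f := by
    rw [← shell.boulwareDeser_left hb hgf, ← Mp_eq, boulwareDeser, one_mul, hfp, hYp]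
  have fm_eq : fm = g := by
    rw [← shell.boulwareDeser_right hb hgf, ← Mm_eq, boulwareDeser, neg_one_mul,
      ← sub_eq_add_neg, hfm, hYm]
  have f_pos : 0 < f := shell.left_pos hb.le
  have g_pos : 0 < g := shell.right_pos hb.le
  rw [Mp_eq, Mm_eq, fp_eq, fm_eq]
  exact ⟨by positivity, by positivity, shell.add_eq, shell.mul_eq, f_pos, g_pos⟩
end
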